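/- arXiv:1205.3454 — 2 statements merged into one kernel-verified Lean document; each statement's English description precedes it below -/
import Mathlib

section
/- An idempotent covered semigroup S is regular (for every a ∈ S there is x ∈ S with axa = a) if and only if the semiband T(S) is regular. -/
namespace SemibandEmbed

/-- The two-element right-zero semigroup `R₂ = {σ, τ}`. -/
inductive R2 : Type where
  | σ : R2
  | τ : R2
  deriving DecidableEq

section GreenDefs

variable {S : Type*} [Semigroup S]

/-- Green's relation 𝓡 : `a 𝓡 b` iff `a S¹ = b S¹` (inside `S¹ = WithOne S`). -/
def greenR (a b : S) : Prop :=
  {x : WithOne S | ∃ u : WithOne S, x = (a : WithOne S) * u} =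
    {x : WithOne S | ∃ u : WithOne S, x = (b : WithOne S) * u}

/-- Green's relation 𝓛 : `a 𝓛 b` iff `S¹ a = S¹ b`. -/
def greenL (a b : S) : Prop :=
  {x : WithOne S | ∃ u : WithOne S, x = u * (a : WithOne S)} =
    {x : WithOne S | ∃ u : WithOne S, x = u * (b : WithOne S)}

/-- Green's relation 𝓗 = 𝓛 ∩ 𝓡. -/
def greenH (a b : S) : Prop := greenL a b ∧ greenR a b

/-- Green's relation 𝓓 : `a 𝓓 b` iff `a 𝓡 c` and `c 𝓛 b` for some `c`. -/
def greenD (a b : S) : Prop := ∃ c : S, greenR a c ∧ greenL c b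

/-- Green's relation 𝓙 : `a 𝓙 b` iff `S¹ a S¹ = S¹ b S¹`. -/
def greenJ (a b : S) : Prop :=
  {x : WithOne S | ∃ u v : WithOne S, x = u * (a : WithOne S) * v} =
    {x : WithOne S | ∃ u v : WithOne S, x = u * (b : WithOne S) * v}

/-- Mitsch's natural partial order on a semigroup. -/
def natLe (a b : S) : Prop := ∃ x y : S, a = x * b ∧ a = b * y ∧ a = a * y

end GreenDefs

/-- A semigroup is idempotent covered if every element `s` satisfies `s e = s = f s`
for some idempotents `e`, `f`. -/
def IdemCovered (S : Type*) [Semigroup S] : Prop :=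
  ∀ s : S, ∃ e f : S, IsIdempotentElem e ∧ IsIdempotentElem f ∧ s * e = s ∧ f * s = s

/-- A semigroup is regular if every `a` satisfies `a x a = a` for some `x`. -/
def IsRegularSemigroup (S : Type*) [Semigroup S] : Prop :=
  ∀ a : S, ∃ x : S, a * x * a = a

/-- A semigroup is periodic if every element generates a finite monogenic subsemigroup,
i.e. `aᵐ = aⁿ` for some `0 < m < n` (powers computed in `S¹ = WithOne S`). -/
def IsPeriodic (S : Type*) [Semigroup S] : Prop :=
  ∀ a : S, ∃ m n : ℕ, 0 < m ∧ m < n ∧ (a : WithOne S) ^ m = (a : WithOne S) ^ n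

/-- `𝓗` is a left congruence. -/
def IsLeftCongH (S : Type*) [Semigroup S] : Prop :=
  ∀ a b c : S, greenH a b → greenH (c * a) (c * b)

/-- `𝓗` is a right congruence. -/
def IsRightCongH (S : Type*) [Semigroup S] : Prop :=
  ∀ a b c : S, greenH a b → greenH (a * c) (b * c)

/-- A semigroup is completely regular if every element is 𝓗-related to an idempotent. -/
def IsCompletelyRegular (S : Type*) [Semigroup S] : Prop :=
  ∀ a : S, ∃ e : S, IsIdempotentElem e ∧ greenH a e

section SemidirectProduct

variable {S : Type*} [Semigroup S]

/-- The multiplication of the semidirect product `(S × S) * R₂`: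
`(t₁,s₁,σ)·(t₂,s₂,α) = (t₁s₂, s₁s₂, α)` and `(t₁,s₁,τ)·(t₂,s₂,α) = (t₁t₂, s₁t₂, α)`. -/
def sdMul (x y : S × S × R2) : S × S × R2 :=
  match x, y with
  | (t₁, s₁, R2.σ), (_, s₂, α) => (t₁ * s₂, s₁ * s₂, α)
  | (t₁, s₁, R2.τ), (t₂, _, α) => (t₁ * t₂, s₁ * t₂, α)

instance : Mul (S × S × R2) := ⟨sdMul⟩

theorem sdMul_def (x y : S × S × R2) : x * y = sdMul x y := rfl

instance : Semigroup (S × S × R2) where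
  mul_assoc x y z := by
    obtain ⟨t₁, s₁, α₁⟩ := x
    obtain ⟨t₂, s₂, α₂⟩ := y
    obtain ⟨t₃, s₃, α₃⟩ := z
    cases α₁ <;> cases α₂ <;> simp [sdMul_def, sdMul, mul_assoc]

/-- The set `E = {(s,t,α) ∈ E(T*R₂) : s ∈ S¹ t}`. -/
def Eset (S : Type*) [Semigroup S] : Set (S × S × R2) :=
  {x | IsIdempotentElem x ∧ ∃ a : WithOne S, (x.1 : WithOne S) = a * (x.2.1 : WithOne S)}

/-- `T(S)`: the subsemigroup of the semidirect product generated by `E`. -/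
def TS (S : Type*) [Semigroup S] : Subsemigroup (S × S × R2) :=
  Subsemigroup.closure (Eset S)

/-- Green's `𝓛` is a right congruence. -/
theorem greenL_mul_right {S : Type*} [Semigroup S] {a b : S} (hab : greenL a b) (c : S) :
    greenL (a * c) (b * c) := by
  have key : ∀ {a b : S}, greenL a b → ∀ x : WithOne S,
      (∃ u : WithOne S, x = u * ((a * c : S) : WithOne S)) →
      (∃ u : WithOne S, x = u * ((b * c : S) : WithOne S)) := by
    intro a b hab x hx
    obtain ⟨u, rfl⟩ := hx
    have h1 : (u * (a : WithOne S)) ∈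
        {x : WithOne S | ∃ u : WithOne S, x = u * (a : WithOne S)} := ⟨u, rfl⟩
    rw [greenL] at hab
    rw [hab] at h1
    obtain ⟨w, hw⟩ := h1
    refine ⟨w, ?_⟩
    rw [WithOne.coe_mul, WithOne.coe_mul, ← mul_assoc, hw, mul_assoc]
  have hab' : greenL b a := hab.symm
  ext x
  exact ⟨key hab x, key hab' x⟩

/-- `R(S) = {(s,t,α) ∈ T(S) : s 𝓛 t}`, a subsemigroup of `T(S)`. -/
def RS (S : Type*) [Semigroup S] : Subsemigroup ↥(TS S) where
  carrier := {x | greenL (x : S × S × R2).1 (x : S × S × R2).2.1}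
  mul_mem' := by
    rintro ⟨⟨s, t, α⟩, hx⟩ ⟨⟨u, v, β⟩, hy⟩ hxs hys
    simp only [Set.mem_setOf_eq] at hxs hys ⊢
    cases α <;> exact greenL_mul_right hxs _

end SemidirectProduct


theorem closed_aux {S : Type*} [Semigroup S] (x : S × S × R2) (hx : x ∈ TS S) :
    ∃ a : WithOne S, (x.1 : WithOne S) = a * (x.2.1 : WithOne S) := by
  induction hx using Subsemigroup.closure_induction with
  | mem x h => exact h.2
  | mul x y _ _ h1 _ =>
    obtain ⟨a, ha⟩ := h1
    obtain ⟨t₁, s₁, α⟩ := x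
    obtain ⟨t₂, s₂, β⟩ := y
    refine ⟨a, ?_⟩
    cases α <;> simp only [sdMul_def, sdMul, WithOne.coe_mul] at ha ⊢ <;> rw [ha, mul_assoc]

theorem diag_aux {S : Type*} [Semigroup S] (hS : IdemCovered S) (t : S) :
    (t, t, R2.σ) ∈ TS S := by
  obtain ⟨e, f, he, hf, hte, hft⟩ := hS t
  have h1 : (f, f, R2.τ) ∈ TS S := by
    refine Subsemigroup.subset_closure ⟨?_, 1, by simp⟩
    simp [IsIdempotentElem, sdMul_def, sdMul, hf.eq]
  have h2 : (t, e, R2.σ) ∈ TS S := by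
    refine Subsemigroup.subset_closure ⟨?_, (t : WithOne S), ?_⟩
    · simp [IsIdempotentElem, sdMul_def, sdMul, he.eq, hte]
    · simp only [← WithOne.coe_mul, hte]
  have h3 := (TS S).mul_mem h1 h2
  simpa [sdMul_def, sdMul, hft] using h3

/-- `S` is regular iff `T(S)` is regular. -/
theorem statement_6 {S : Type*} [Semigroup S] (hS : IdemCovered S) :
    IsRegularSemigroup S ↔ IsRegularSemigroup ↥(TS S) := by
  constructor
  · rintro h ⟨⟨s, t, α⟩, hx⟩
    obtain ⟨v, hv⟩ := h t
    have hs : s * v * t = s := by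
      obtain ⟨a, ha⟩ := closed_aux _ hx
      simp only at ha
      apply WithOne.coe_injective
      rw [WithOne.coe_mul, WithOne.coe_mul, ha, mul_assoc, mul_assoc, ← WithOne.coe_mul,
        ← WithOne.coe_mul, ← mul_assoc, hv]
    refine ⟨⟨_, diag_aux hS v⟩, Subtype.ext ?_⟩
    cases α <;> simp [sdMul_def, sdMul, hv, hs]
  · intro h a
    obtain ⟨⟨⟨u, v, β⟩, hx⟩, hy⟩ := h ⟨_, diag_aux hS a⟩
    have hz := congrArg (fun z => z.1.1) hy
    refine ⟨v, ?_⟩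
    cases β <;> simpa [sdMul_def, sdMul] using hz

end SemibandEmbed
end

section
/- Let S be an idempotent covered semigroup and let (s,t,α), (u,v,β) ∈ T(S). Then (s,t,α) 𝓗 (u,v,β) in T(S) if and only if α = β, t 𝓗 v in S, and there exists a ∈ S¹ with s = at and u = av. -/
namespace SemibandEmbed

theorem withOne_ind {S : Type*} {P : WithOne S → Prop} (one : P 1)
    (coe : ∀ a : S, P (a : WithOne S)) (x : WithOne S) : P x :=
  WithOne.cases_on x one coe

theorem greenR_iff {S : Type*} [Semigroup S] (a b : S) : greenR a b ↔
    (∃ z : WithOne S, (b : WithOne S) = a * z) ∧ ∃ z : WithOne S, (a : WithOne S) = b * z := by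
  unfold greenR
  constructor
  · intro h
    constructor
    · have : (b : WithOne S) ∈ {x : WithOne S | ∃ u : WithOne S, x = (b : WithOne S) * u} :=
        ⟨1, by simp⟩
      rwa [← h] at this
    · have : (a : WithOne S) ∈ {x : WithOne S | ∃ u : WithOne S, x = (a : WithOne S) * u} :=
        ⟨1, by simp⟩
      rwa [h] at this
  · rintro ⟨⟨z, hz⟩, ⟨w, hw⟩⟩
    ext x
    constructor
    · rintro ⟨c, rfl⟩
      exact ⟨w * c, by rw [← mul_assoc, ← hw]⟩
    · rintro ⟨c, rfl⟩
      exact ⟨z * c, by rw [← mul_assoc, ← hz]⟩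

theorem greenL_iff {S : Type*} [Semigroup S] (a b : S) : greenL a b ↔
    (∃ z : WithOne S, (b : WithOne S) = z * a) ∧ ∃ z : WithOne S, (a : WithOne S) = z * b := by
  unfold greenL
  constructor
  · intro h
    constructor
    · have : (b : WithOne S) ∈ {x : WithOne S | ∃ u : WithOne S, x = u * (b : WithOne S)} :=
        ⟨1, by simp⟩
      rwa [← h] at this
    · have : (a : WithOne S) ∈ {x : WithOne S | ∃ u : WithOne S, x = u * (a : WithOne S)} :=
        ⟨1, by simp⟩
      rwa [h] at this
  · rintro ⟨⟨z, hz⟩, ⟨w, hw⟩⟩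
    ext x
    constructor
    · rintro ⟨c, rfl⟩
      exact ⟨c * w, by rw [mul_assoc, ← hw]⟩
    · rintro ⟨c, rfl⟩
      exact ⟨c * z, by rw [mul_assoc, ← hz]⟩

theorem exists_coe_mul {S : Type*} [Semigroup S] (a : WithOne S) (y : S) :
    ∃ x : S, (x : WithOne S) = a * y := by
  induction a using withOne_ind with
  | one => exact ⟨y, by simp⟩
  | coe a => exact ⟨a * y, by simp⟩

theorem mul_σ {S : Type*} [Semigroup S] (a b c d : S) (α : R2) :
    ((a, b, R2.σ) : S × S × R2) * (c, d, α) = (a * d, b * d, α) := rfl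

theorem mul_τ {S : Type*} [Semigroup S] (a b c d : S) (α : R2) :
    ((a, b, R2.τ) : S × S × R2) * (c, d, α) = (a * c, b * c, α) := rfl

theorem mem_TS_iff {S : Type*} [Semigroup S] (hS : IdemCovered S) (x : S × S × R2) :
    x ∈ TS S ↔ ∃ a : WithOne S, (x.1 : WithOne S) = a * (x.2.1 : WithOne S) := by
  constructor
  · intro h
    refine Subsemigroup.closure_induction (fun x hx => hx.2) ?_ h
    rintro ⟨s, t, α⟩ ⟨u, v, β⟩ _ _ ⟨a, ha⟩ -
    refine ⟨a, ?_⟩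
    simp only at ha
    cases α
    · simp only [mul_σ, WithOne.coe_mul, ha, mul_assoc]
    · simp only [mul_τ, WithOne.coe_mul, ha, mul_assoc]
  · obtain ⟨s, t, α⟩ := x
    rintro ⟨a, ha⟩
    simp only at ha
    obtain ⟨f, e, hf, he, hft, het⟩ := hS t
    obtain ⟨x, hx⟩ := exists_coe_mul a e
    have hxe : x * e = x := by
      apply WithOne.coe_injective
      rw [WithOne.coe_mul, hx, mul_assoc, ← WithOne.coe_mul, he.eq]
    have hxt : x * t = s := by
      apply WithOne.coe_injective
      rw [WithOne.coe_mul, hx, mul_assoc, ← WithOne.coe_mul, het, ha]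
    have h1 : ((x, e, R2.σ) : S × S × R2) ∈ TS S := Subsemigroup.subset_closure
      ⟨by rw [IsIdempotentElem, mul_σ, hxe, he.eq], a, hx⟩
    have h2 : ((e, e, R2.τ) : S × S × R2) ∈ TS S := Subsemigroup.subset_closure
      ⟨by rw [IsIdempotentElem, mul_τ, he.eq], 1, by simp⟩
    have h3 : ((t, f, R2.σ) : S × S × R2) ∈ TS S := Subsemigroup.subset_closure
      ⟨by rw [IsIdempotentElem, mul_σ, hft, hf.eq], t, by
        simp only [← WithOne.coe_mul, hft]⟩
    have h4 : ((f, f, R2.τ) : S × S × R2) ∈ TS S := Subsemigroup.subset_closure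
      ⟨by rw [IsIdempotentElem, mul_τ, hf.eq], 1, by simp⟩
    have h5 := mul_mem (mul_mem h1 h2) h3
    rw [mul_σ, mul_τ, hxe, he.eq, hxt, het] at h5
    cases α
    · exact h5
    · have h6 := mul_mem h5 h4
      rwa [mul_σ, hft, ← hxt, mul_assoc, hft, hxt] at h6

theorem R_fwd {S : Type*} [Semigroup S] {s t u v : S} {α β : R2}
    {hx : ((s, t, α) : S × S × R2) ∈ TS S} {hy : ((u, v, β) : S × S × R2) ∈ TS S}
    (h : ∃ z : WithOne (TS S), ((⟨(u, v, β), hy⟩ : TS S) : WithOne (TS S)) =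
      ((⟨(s, t, α), hx⟩ : TS S) : WithOne (TS S)) * z) :
    ∃ z : WithOne S, (u : WithOne S) = s * z ∧ (v : WithOne S) = t * z := by
  obtain ⟨z, hz⟩ := h
  induction z using withOne_ind with
  | one =>
    rw [mul_one, WithOne.coe_inj, Subtype.mk.injEq] at hz
    cases hz
    exact ⟨1, by simp, by simp⟩
  | coe z =>
    obtain ⟨⟨p, q, γ⟩, hp⟩ := z
    rw [← WithOne.coe_mul, WithOne.coe_inj, Subtype.ext_iff] at hz
    change (u, v, β) = ((s, t, α) : S × S × R2) * (p, q, γ) at hz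
    cases α
    · rw [mul_σ] at hz
      cases hz
      exact ⟨q, by simp, by simp⟩
    · rw [mul_τ] at hz
      cases hz
      exact ⟨p, by simp, by simp⟩

theorem L_fwd {S : Type*} [Semigroup S] (hS : IdemCovered S) {s t u v : S} {α β : R2}
    {hx : ((s, t, α) : S × S × R2) ∈ TS S} {hy : ((u, v, β) : S × S × R2) ∈ TS S}
    (h : ∃ z : WithOne (TS S), ((⟨(u, v, β), hy⟩ : TS S) : WithOne (TS S)) =
      z * ((⟨(s, t, α), hx⟩ : TS S) : WithOne (TS S))) :
    α = β ∧ ∃ z : WithOne S, (v : WithOne S) = z * t := by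
  obtain ⟨z, hz⟩ := h
  induction z using withOne_ind with
  | one =>
    rw [one_mul, WithOne.coe_inj, Subtype.mk.injEq] at hz
    cases hz
    exact ⟨rfl, 1, by simp⟩
  | coe z =>
    obtain ⟨⟨p, q, γ⟩, hp⟩ := z
    rw [← WithOne.coe_mul, WithOne.coe_inj, Subtype.ext_iff] at hz
    change (u, v, β) = ((p, q, γ) : S × S × R2) * (s, t, α) at hz
    cases γ
    · rw [mul_σ] at hz
      cases hz
      exact ⟨rfl, q, by simp⟩
    · rw [mul_τ] at hz
      cases hz
      obtain ⟨a, ha⟩ := (mem_TS_iff hS _).1 hx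
      simp only at ha
      exact ⟨rfl, q * a, by rw [WithOne.coe_mul, ha, mul_assoc]⟩

theorem R_bwd {S : Type*} [Semigroup S] (hS : IdemCovered S) {s t u v : S} {α : R2}
    {hx : ((s, t, α) : S × S × R2) ∈ TS S} {hy : ((u, v, α) : S × S × R2) ∈ TS S}
    {a : WithOne S} (hs : (s : WithOne S) = a * t) (hu : (u : WithOne S) = a * v)
    (h : ∃ z : WithOne S, (v : WithOne S) = t * z) :
    ∃ z : WithOne (TS S), ((⟨(u, v, α), hy⟩ : TS S) : WithOne (TS S)) =
      ((⟨(s, t, α), hx⟩ : TS S) : WithOne (TS S)) * z := by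
  obtain ⟨z, hz⟩ := h
  have huz : (u : WithOne S) = s * z := by rw [hu, hz, hs, mul_assoc]
  induction z using withOne_ind with
  | one =>
    rw [mul_one, WithOne.coe_inj] at hz huz
    subst hz huz
    exact ⟨1, by simp⟩
  | coe z =>
    rw [← WithOne.coe_mul, WithOne.coe_inj] at hz huz
    refine ⟨((⟨(z, z, α), (mem_TS_iff hS _).2 ⟨1, by simp⟩⟩ : TS S) : WithOne (TS S)), ?_⟩
    rw [← WithOne.coe_mul, WithOne.coe_inj, Subtype.ext_iff]
    change (u, v, α) = ((s, t, α) : S × S × R2) * (z, z, α)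
    subst hz huz
    cases α <;> rfl

theorem L_bwd {S : Type*} [Semigroup S] (hS : IdemCovered S) {s t u v : S} {α : R2}
    {hx : ((s, t, α) : S × S × R2) ∈ TS S} {hy : ((u, v, α) : S × S × R2) ∈ TS S}
    {a : WithOne S} (hu : (u : WithOne S) = a * v)
    (h : ∃ z : WithOne S, (v : WithOne S) = z * t) :
    ∃ z : WithOne (TS S), ((⟨(u, v, α), hy⟩ : TS S) : WithOne (TS S)) =
      z * ((⟨(s, t, α), hx⟩ : TS S) : WithOne (TS S)) := by
  obtain ⟨z, hz⟩ := h
  obtain ⟨f, e, hf, he, hft, het⟩ := hS t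
  obtain ⟨y, hy'⟩ := exists_coe_mul z e
  obtain ⟨x, hx'⟩ := exists_coe_mul a y
  have hv : v = y * t := by
    apply WithOne.coe_injective
    rw [WithOne.coe_mul, hy', mul_assoc, ← WithOne.coe_mul, het, hz]
  have hu' : u = x * t := by
    apply WithOne.coe_injective
    rw [WithOne.coe_mul, hx', mul_assoc, ← WithOne.coe_mul, ← hv, hu]
  refine ⟨((⟨(x, y, R2.σ), (mem_TS_iff hS _).2 ⟨a, hx'⟩⟩ : TS S) : WithOne (TS S)), ?_⟩
  rw [← WithOne.coe_mul, WithOne.coe_inj, Subtype.ext_iff]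
  change (u, v, α) = ((x, y, R2.σ) : S × S × R2) * (s, t, α)
  rw [mul_σ, hv, hu']

/-- description of Green's relation 𝓗 on `T(S)`. -/
theorem statement_9 {S : Type*} [Semigroup S] (hS : IdemCovered S)
    (s t u v : S) (α β : R2)
    (hx : ((s, t, α) : S × S × R2) ∈ TS S) (hy : ((u, v, β) : S × S × R2) ∈ TS S) :
    greenH (⟨(s, t, α), hx⟩ : ↥(TS S)) ⟨(u, v, β), hy⟩ ↔
      α = β ∧ greenH t v ∧ ∃ a : WithOne S, (s : WithOne S) = a * (t : WithOne S) ∧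
        (u : WithOne S) = a * (v : WithOne S) := by
  simp only [greenH, greenL_iff, greenR_iff]
  constructor
  · rintro ⟨⟨hl1, hl2⟩, hr1, hr2⟩
    obtain ⟨hab, h1⟩ := L_fwd hS hl1
    obtain ⟨-, h2⟩ := L_fwd hS hl2
    obtain ⟨z, hz1, hz2⟩ := R_fwd hr1
    obtain ⟨w, -, hw2⟩ := R_fwd hr2
    obtain ⟨a, ha⟩ := (mem_TS_iff hS _).1 hx
    simp only at ha
    exact ⟨hab, ⟨⟨h1, h2⟩, ⟨z, hz2⟩, ⟨w, hw2⟩⟩, a, ha, by rw [hz1, ha, hz2, mul_assoc]⟩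
  · rintro ⟨rfl, ⟨⟨h1, h2⟩, h3, h4⟩, a, hs, hu⟩
    exact ⟨⟨L_bwd hS hu h1, L_bwd hS hs h2⟩, R_bwd hS hs hu h3, R_bwd hS hu hs h4⟩

end SemibandEmbed
end
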